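/- If α ∈ (0,1) is a 0''-left-c.e. real and c ∈ ℕ satisfies α + 2^{-c} < 1, then there exist an oracle machine M and a string ρ of length c such that M(σ,n) is undefined for every n and every string σ compatible with ρ, and μ(COF(M)) = α. Similarly, if α ∈ (0,1) is 0''-left-c.e. and 2^{-c} < α, then there exist an oracle machine M' and a string ρ' of length c such that M'(σ,n) is undefined for every σ compatible with ρ' and every n, and μ(COM(M')) = α. -/

import Mathlib

open scoped Classical
open MeasureTheory

namespace RandProb

/-- Cantor space: the space of infinite binary sequences. -/
abbrev Cantor := ℕ → Bool

/-! ### Oracle partial recursive functions, via codes -/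

/-- Codes for partial recursive functions with access to an oracle `O : ℕ → ℕ`.
These codes play the role of (oracle) Turing machines. -/
inductive CodeO : Type
  | zero : CodeO
  | succ : CodeO
  | left : CodeO
  | right : CodeO
  | oracle : CodeO
  | pair : CodeO → CodeO → CodeO
  | comp : CodeO → CodeO → CodeO
  | prec : CodeO → CodeO → CodeO
  | rfind' : CodeO → CodeO

/-- Evaluation of an oracle code with (total) oracle `O`. -/
def CodeO.eval (O : ℕ → ℕ) : CodeO → ℕ →. ℕ
  | .zero => pure 0
  | .succ => Nat.succ
  | .left => ↑fun n : ℕ => n.unpair.1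
  | .right => ↑fun n : ℕ => n.unpair.2
  | .oracle => ↑fun n : ℕ => O n
  | .pair cf cg => fun n => Nat.pair <$> cf.eval O n <*> cg.eval O n
  | .comp cf cg => fun n => cg.eval O n >>= cf.eval O
  | .prec cf cg =>
    Nat.unpaired fun a n =>
      n.rec (cf.eval O a) fun y IH => do
        let i ← IH
        cg.eval O (Nat.pair a (Nat.pair y i))
  | .rfind' cf =>
    Nat.unpaired fun a m =>
      (Nat.rfind fun n => (fun m => m = 0) <$> cf.eval O (Nat.pair a (n + m))).map (· + m)

/-- A canonical injective numbering of oracle codes. -/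
def CodeO.encode : CodeO → ℕ
  | .zero => 0
  | .succ => 1
  | .left => 2
  | .right => 3
  | .oracle => 4
  | .pair cf cg => 2 * (2 * Nat.pair cf.encode cg.encode) + 5
  | .comp cf cg => 2 * (2 * Nat.pair cf.encode cg.encode + 1) + 5
  | .prec cf cg => 2 * (2 * Nat.pair cf.encode cg.encode) + 6
  | .rfind' cf => 2 * (2 * cf.encode + 1) + 6

/-- The Turing jump of an oracle: the halting problem relative to `O`,
as a `{0,1}`-valued function. -/
noncomputable def jump (O : ℕ → ℕ) : ℕ → ℕ := fun e =>
  if ∃ c : CodeO, c.encode = e ∧ (c.eval O e).Dom then 1 else 0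

/-- `iterJump n` is `∅^(n)`, the `n`-th iterate of the halting problem (as an oracle). -/
noncomputable def iterJump : ℕ → ℕ → ℕ
  | 0 => fun _ => 0
  | n + 1 => jump (iterJump n)

/-- `S ⊆ ℕ` is computably enumerable relative to the oracle `O`. -/
def CeIn (O : ℕ → ℕ) (S : Set ℕ) : Prop := ∃ c : CodeO, S = {m | (c.eval O m).Dom}

/-- The left Dedekind cut of `α` (as a set of codes of rationals) is c.e. in `O`. -/
def LeftCeIn (O : ℕ → ℕ) (α : ℝ) : Prop :=
  CeIn O {m | ∃ q : ℚ, Encodable.encode q = m ∧ (q : ℝ) < α}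

/-- The right Dedekind cut of `α` (as a set of codes of rationals) is c.e. in `O`. -/
def RightCeIn (O : ℕ → ℕ) (α : ℝ) : Prop :=
  CeIn O {m | ∃ q : ℚ, Encodable.encode q = m ∧ α < (q : ℝ)}

/-! ### Martin-Löf randomness for real numbers -/

/-- The `i`-th component of a Martin-Löf test coded by the set `W ⊆ ℕ`:
the union of all open rational intervals whose codes are enumerated into the
`i`-th section of `W`. -/
def testSet (W : Set ℕ) (i : ℕ) : Set ℝ :=
  {x | ∃ p q : ℚ, Nat.pair i (Encodable.encode (p, q)) ∈ W ∧ (p : ℝ) < x ∧ x < (q : ℝ)}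

/-- `α` is Martin-Löf random relative to the oracle `O`. -/
def MLRandomIn (O : ℕ → ℕ) (α : ℝ) : Prop :=
  ∀ W : Set ℕ, CeIn O W →
    (∀ i, volume (testSet W i) ≤ ENNReal.ofReal ((2 : ℝ)⁻¹ ^ i)) →
    ∃ i, α ∉ testSet W i

/-- `α` is `n`-random: Martin-Löf random relative to `∅^(n-1)`. -/
def NRandom (n : ℕ) (α : ℝ) : Prop := MLRandomIn (iterJump (n - 1)) α

/-! ### The uniform measure on Cantor space -/

/-- The binary digits of a real number (meaningful on `[0,1)`). -/
noncomputable def digits (x : ℝ) : Cantor := fun n => decide (⌊x * 2 ^ (n + 1)⌋ % 2 = 1)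

/-- The uniform (Lebesgue) product measure on Cantor space, obtained as the
pushforward of Lebesgue measure on `[0,1)` under the binary-digit map. -/
noncomputable def mu : Measure Cantor :=
  Measure.map digits (volume.restrict (Set.Ico (0 : ℝ) 1))

/-- The uniform measure of a set of elements of Cantor space, as a real number. -/
noncomputable def muR (S : Set Cantor) : ℝ := (mu S).toReal

/-! ### Strings, prefixes and cylinders -/

/-- The length-`n` initial segment of `X ∈ 2^ω`, as a finite binary string. -/
def initSeg (X : Cantor) (n : ℕ) : List Bool := (List.range n).map X

/-- `⟦S⟧`: the elements of Cantor space having a prefix in the set of strings `S`. -/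
def cyl (S : Set (List Bool)) : Set Cantor := {X | ∃ n, initSeg X n ∈ S}

/-- A set of strings is prefix-free if none of its elements properly extends another. -/
def IsPrefixFree (S : Set (List Bool)) : Prop := ∀ σ ∈ S, ∀ τ ∈ S, σ <+: τ → σ = τ

/-- A set of strings is upward closed if it is closed under taking extensions. -/
def UpClosed (S : Set (List Bool)) : Prop := ∀ σ ∈ S, ∀ τ, σ <+: τ → τ ∈ S

/-- Two strings are compatible if one is a prefix of the other. -/
def Compatible (σ τ : List Bool) : Prop := σ <+: τ ∨ τ <+: σ

/-! ### Oracle machines -/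

/-- An element of Cantor space viewed as a `{0,1}`-valued oracle. -/
def oX (X : Cantor) : ℕ → ℕ := fun n => cond (X n) 1 0

/-- `evalO X c n`: the (possibly divergent) output of the oracle machine `c`
on input `n` with oracle `X`. -/
def evalO (X : Cantor) (c : CodeO) (n : ℕ) : Part ℕ := c.eval (oX X) n

/-- The oracle obtained by writing the string `ρ` before the bits of `X`. -/
def prepend (ρ : List Bool) (X : Cantor) : Cantor := fun n =>
  if n < ρ.length then ρ.getD n false else X (n - ρ.length)

/-- `X ∈ 2^ω` extends the finite string `ρ`. -/
def Extends (X : Cantor) (ρ : List Bool) : Prop := initSeg X ρ.length = ρ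

/-- `u` is a universal oracle machine: some effective, prefix-free translation
`c ↦ σ_c` satisfies `u(σ_c * X, n) ≃ c(X, n)` for all machines `c`. -/
def UniversalOM (u : CodeO) : Prop :=
  ∃ σ : CodeO → List Bool,
    (∃ f : ℕ → ℕ, Computable f ∧ ∀ c : CodeO, f c.encode = Encodable.encode (σ c)) ∧
    IsPrefixFree (Set.range σ) ∧
    ∀ (c : CodeO) (X : Cantor) (n : ℕ), evalO (prepend (σ c) X) u n = evalO X c n

/-- `TOT(c)`: the oracles `X` such that the function `c(X)` is total. -/
def TOT (c : CodeO) : Set Cantor := {X | ∀ n, (evalO X c n).Dom}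

/-- The domain of the partial function `c(X)`. -/
def domSet (c : CodeO) (X : Cantor) : Set ℕ := {n | (evalO X c n).Dom}

/-- The range of the partial function `c(X)`. -/
def ranSet (c : CodeO) (X : Cantor) : Set ℕ := {v | ∃ n, v ∈ evalO X c n}

/-- `INF(c)`: the oracles `X` such that `c(X)` has infinite domain. -/
def INF (c : CodeO) : Set Cantor := {X | (domSet c X).Infinite}

/-- `COF(c)`: the oracles `X` such that `c(X)` has cofinite domain. -/
def COF (c : CodeO) : Set Cantor := {X | (domSet c X)ᶜ.Finite}

/-- `COM(c)`: the oracles `X` such that `c(X)` has computable domain. -/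
def COM (c : CodeO) : Set Cantor := {X | ComputablePred fun n => n ∈ domSet c X}

/-- The characteristic function of a set of naturals. -/
noncomputable def chi (A : Set ℕ) : ℕ → ℕ := fun n => if n ∈ A then 1 else 0

/-- Turing reducibility between sets of naturals. -/
def TuringLEs (B A : Set ℕ) : Prop := ∃ c : CodeO, ∀ n, c.eval (chi A) n = Part.some (chi B n)

/-- The halting problem `∅'` as a set of naturals. -/
noncomputable def HaltingSet : Set ℕ := {e | iterJump 1 e = 1}

/-- `COMPL(c)`: the oracles `X` such that the domain of `c(X)` computes the halting problem. -/
noncomputable def COMPL (c : CodeO) : Set Cantor := {X | TuringLEs HaltingSet (domSet c X)}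

/-- Turing reducibility between total functions on ℕ. -/
def TuringLEf (f g : ℕ → ℕ) : Prop := ∃ c : CodeO, ∀ n, c.eval g n = Part.some (f n)

/-- A real number viewed as an oracle, via its binary expansion. -/
noncomputable def realOracle (α : ℝ) : ℕ → ℕ := oX (digits α)

/-- Two reals have Turing-incomparable degrees. -/
noncomputable def TIncompReal (α β : ℝ) : Prop :=
  ¬ TuringLEf (realOracle α) (realOracle β) ∧ ¬ TuringLEf (realOracle β) (realOracle α)

/-! ### Arithmetical hierarchy -/

/-- Evaluation with the trivial (empty) oracle: ordinary partial recursion. -/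
def eval0 (c : CodeO) : ℕ →. ℕ := c.eval fun _ => 0

/-- `SigmaNumIdx n c` is the `Σ^0_{n+1}` subset of `ℕ` with index `c`. -/
def SigmaNumIdx : ℕ → CodeO → Set ℕ
  | 0, c => {m | (eval0 c m).Dom}
  | n + 1, c => {m | ∃ k, Nat.pair m k ∉ SigmaNumIdx n c}

/-- `S ⊆ ℕ` is `Σ^0_n` (intended for `n ≥ 1`). -/
def SigmaN (n : ℕ) (S : Set ℕ) : Prop := ∃ c : CodeO, S = SigmaNumIdx (n - 1) c

/-- The set of codes of the elements of a set of binary strings. -/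
def strCodes (S : Set (List Bool)) : Set ℕ := {m | ∃ σ ∈ S, Encodable.encode σ = m}

/-- A set of binary strings is `Σ^0_n`. -/
def SigmaStr (n : ℕ) (S : Set (List Bool)) : Prop := SigmaN n (strCodes S)

/-- A set of binary strings is `Π^0_n`: its complement is `Σ^0_n`. -/
def PiStr (n : ℕ) (S : Set (List Bool)) : Prop := SigmaStr n Sᶜ

/-- A set of binary strings is c.e. relative to the oracle `O`. -/
def CeStrIn (O : ℕ → ℕ) (S : Set (List Bool)) : Prop := CeIn O (strCodes S)

/-- `SigmaClassIdx n c m` is the `Σ^0_{n+1}` class of elements of Cantor space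
with index `c` and parameter `m`. -/
def SigmaClassIdx : ℕ → CodeO → ℕ → Set Cantor
  | 0, c, m => {X | (evalO X c m).Dom}
  | n + 1, c, m => {X | ∃ k, X ∉ SigmaClassIdx n c (Nat.pair m k)}

/-! ### Monotone machines -/

/-- A monotone machine: a partial computable, monotone map on finite binary strings. -/
structure MonoMachine where
  f : List Bool →. List Bool
  partrec : Partrec f
  mono : ∀ ⦃σ τ a b : List Bool⦄, σ <+: τ → a ∈ f σ → b ∈ f τ → a <+: b

/-- The oracles `X` such that the output of the monotone machine on `X` is infinite. -/
def MonoINF (M : MonoMachine) : Set Cantor :=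
  {X | ∀ k, ∃ n a, a ∈ M.f (initSeg X n) ∧ k ≤ a.length}

/-- The `k`-th bit of the output `M(X)` of a monotone machine is `b`. -/
def MonoMachine.hasBit (M : MonoMachine) (X : Cantor) (k : ℕ) (b : Bool) : Prop :=
  ∃ n a, a ∈ M.f (initSeg X n) ∧ a[k]? = some b

/-- `U` is a universal monotone machine. -/
def UniversalMono (U : MonoMachine) : Prop :=
  ∃ (M : ℕ → MonoMachine) (σ : ℕ → List Bool),
    Partrec₂ (fun (e : ℕ) (τ : List Bool) => (M e).f τ) ∧
    (∀ V : MonoMachine, ∃ e, (M e).f = V.f) ∧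
    Computable σ ∧ IsPrefixFree (Set.range σ) ∧
    ∀ e τ, U.f (σ e ++ τ) = (M e).f τ

/-! ### Infinitary self-delimiting machines -/

/-- Chaitin's infinitary self-delimiting machines: `f σ n` is the `n`-th approximation
of the output on program `σ` (`none` meaning divergence); the convergence relation is
decidable, approximations are monotone, and machines are self-delimiting. -/
structure InfMachine where
  f : List Bool → ℕ → Option (List Bool)
  computable : Computable₂ f
  mono : ∀ σ m n a, n < m → f σ m = some a → ∃ b, f σ n = some b ∧ b <+: a
  sd : ∀ σ τ n a, f σ n = some a → f (σ ++ τ) n = some a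

/-- `M^∞(σ)↓`: all approximations converge. -/
def InfMachine.domInf (M : InfMachine) (σ : List Bool) : Prop := ∀ n, M.f σ n ≠ none

/-- The domain of `M^∞`. -/
def InfMachine.DOM (M : InfMachine) : Set (List Bool) := {σ | M.domInf σ}

/-- The output `M^∞(σ)` is infinite (a stream). -/
def InfMachine.outInf (M : InfMachine) (σ : List Bool) : Prop :=
  ∀ k, ∃ n a, M.f σ n = some a ∧ k ≤ a.length

/-- `FIN(M^∞)`: programs in the domain with finite output. -/
def InfMachine.FIN (M : InfMachine) : Set (List Bool) := {σ | M.domInf σ ∧ ¬ M.outInf σ}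

/-- `INF(M^∞)`: programs in the domain with infinite output. -/
def InfMachine.INF (M : InfMachine) : Set (List Bool) := {σ | M.domInf σ ∧ M.outInf σ}

/-- The `k`-th bit of the output `M^∞(σ)` is `b`. -/
def InfMachine.hasBit (M : InfMachine) (σ : List Bool) (k : ℕ) (b : Bool) : Prop :=
  ∃ n a, M.f σ n = some a ∧ a[k]? = some b

/-- The domain of the prefix-free machine `M^*`: minimal strings in the domain of `M^∞`. -/
def InfMachine.DOMstar (M : InfMachine) : Set (List Bool) :=
  {σ | M.domInf σ ∧ ∀ τ, τ <+: σ → τ ≠ σ → ¬ M.domInf τ}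

/-- Programs whose output is a stream with a tail of 1s. -/
def InfMachine.COFout (M : InfMachine) : Set (List Bool) :=
  {σ | M.domInf σ ∧ M.outInf σ ∧ ∃ t, ∀ k, t ≤ k → M.hasBit σ k true}

/-- `A^∞(σ) ≃ B^∞(τ)`: both converge or both diverge, with equal outputs. -/
def InfAgree (A : InfMachine) (σ : List Bool) (B : InfMachine) (τ : List Bool) : Prop :=
  (A.domInf σ ↔ B.domInf τ) ∧ (A.domInf σ → ∀ k b, (A.hasBit σ k b ↔ B.hasBit τ k b))

/-- `U` is a universal infinitary self-delimiting machine. -/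
def UniversalInf (U : InfMachine) : Prop :=
  ∃ (M : ℕ → InfMachine) (σ : ℕ → List Bool),
    Computable (fun p : ℕ × List Bool × ℕ => (M p.1).f p.2.1 p.2.2) ∧
    (∀ V : InfMachine, ∃ e, ∀ τ, InfAgree (M e) τ V τ) ∧
    Computable σ ∧ IsPrefixFree (Set.range σ) ∧
    ∀ e τ, InfAgree U (σ e ++ τ) (M e) τ

end RandProb

namespace RandProb

/-!
Read `X` as the real `x = 0.X` in binary. For a `∅''`-left-c.e. real `α` the open class `x < α` is
generated by a `Σ⁰₃` set `W` of strings, so it suffices to run, uniformly in `X`, the classical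
reduction of `Σ⁰₃` to cofiniteness. A `Σ⁰₃` statement can be put in the form `∃ j, ∃ᶠ s, T j s` with
`T` primitive recursive. The column `k` of `ℕ ≃ ℕ × ℕ` has an event at stage `0`, at every stage
at which a witness `j ≤ k` for `X ∈ ⟦W⟧` makes progress, and at the stage at which the `k`-th
program halts, and `⟨k, s⟩` is left out of the domain iff `s` is the last event of column `k`.
If `X ∈ ⟦W⟧`, almost every column has infinitely many events, so the domain is cofinite. Otherwise
every column has a last event, and deciding the domain would solve the halting problem. Making the
machine diverge on the cylinder of `1ᶜ`, where `x ≥ 1 - 2⁻ᶜ > α`, or of `0ᶜ`, where `x < 2⁻ᶜ < α`,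
does not change the measures of `COF` and `COM`, respectively.
-/

open Nat.Partrec (Code)
open Nat.Partrec.Code (evaln)
open Filter

theorem exists_codeO_of_partrec {f : ℕ →. ℕ} (hf : Nat.Partrec f) :
    ∃ c : CodeO, ∀ O, c.eval O = f := by
  obtain ⟨c, rfl⟩ := Code.exists_code.1 hf
  clear hf
  induction c with
  | zero => exact ⟨.zero, fun _ => rfl⟩
  | succ => exact ⟨.succ, fun _ => rfl⟩
  | left => exact ⟨.left, fun _ => rfl⟩
  | right => exact ⟨.right, fun _ => rfl⟩
  | pair _ _ hf hg =>
    obtain ⟨⟨f, hf⟩, ⟨g, hg⟩⟩ := hf, hg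
    exact ⟨.pair f g, fun O => by rw [CodeO.eval, Code.eval, hf, hg]⟩
  | comp _ _ hf hg =>
    obtain ⟨⟨f, hf⟩, ⟨g, hg⟩⟩ := hf, hg
    exact ⟨.comp f g, fun O => by rw [CodeO.eval, Code.eval, hf, hg]⟩
  | prec _ _ hf hg =>
    obtain ⟨⟨f, hf⟩, ⟨g, hg⟩⟩ := hf, hg
    exact ⟨.prec f g, fun O => by rw [CodeO.eval, Code.eval, hf, hg]⟩
  | rfind' _ hf =>
    obtain ⟨f, hf⟩ := hf
    exact ⟨.rfind' f, fun O => by rw [CodeO.eval, Code.eval, hf]⟩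

/-- The inverse of `CodeO.encode`. -/
def CodeO.ofNat : ℕ → CodeO
  | 0 => .zero
  | 1 => .succ
  | 2 => .left
  | 3 => .right
  | 4 => .oracle
  | n + 5 =>
    have : n / 4 < n + 5 := by omega
    have : (n / 4).unpair.1 < n + 5 := (Nat.unpair_left_le _).trans_lt this
    have : (n / 4).unpair.2 < n + 5 := (Nat.unpair_right_le _).trans_lt ‹n / 4 < n + 5›
    if n % 4 = 0 then .pair (ofNat (n / 4).unpair.1) (ofNat (n / 4).unpair.2)
    else if n % 4 = 1 then .prec (ofNat (n / 4).unpair.1) (ofNat (n / 4).unpair.2)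
    else if n % 4 = 2 then .comp (ofNat (n / 4).unpair.1) (ofNat (n / 4).unpair.2)
    else .rfind' (ofNat (n / 4))

theorem CodeO.encode_ofNat (n : ℕ) : (CodeO.ofNat n).encode = n := by
  fun_induction CodeO.ofNat n <;> simp_all only [encode, Nat.pair_unpair] <;> omega

theorem CodeO.encode_injective : Function.Injective CodeO.encode := by
  intro c
  induction c <;> intro d h <;> cases d <;> grind [encode, Nat.pair_eq_pair]

theorem CodeO.ofNat_encode (c : CodeO) : CodeO.ofNat c.encode = c :=
  CodeO.encode_injective (CodeO.encode_ofNat _)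

theorem exists_code_getElem? : ∃ L : Code, ∀ (τ : List ℕ) (x : ℕ),
    (L.curry (Encodable.encode τ)).eval x = (τ[x]? : Option ℕ) := by
  have hprim : Primrec fun n : ℕ =>
      ((Encodable.decode (α := List ℕ) n.unpair.1).getD [])[n.unpair.2]? :=
    Primrec.list_getElem?.comp
      (Primrec.option_getD.comp (Primrec.decode.comp (Primrec.fst.comp Primrec.unpair))
        (Primrec.const []))
      (Primrec.snd.comp Primrec.unpair)
  obtain ⟨L, hL⟩ := Code.exists_code.1 (Partrec.nat_iff.1 hprim.to_comp.ofOption)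
  exact ⟨L, fun τ x => by simp [Code.eval_curry, hL]⟩

/-- A code which, curried with the code of a list, computes the list's partial function
`x ↦ τ[x]?`. -/
noncomputable def lookupCode : Code := exists_code_getElem?.choose

theorem lookupCode_eval (τ : List ℕ) (x : ℕ) :
    (lookupCode.curry (Encodable.encode τ)).eval x = (τ[x]? : Option ℕ) :=
  exists_code_getElem?.choose_spec τ x

/-- The ordinary code obtained by answering the oracle queries of an oracle code from the list
`τ`; queries beyond the end of `τ` diverge. -/
noncomputable def CodeO.instantiate (τ : List ℕ) : CodeO → Code
  | .zero => .zero
  | .succ => .succ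
  | .left => .left
  | .right => .right
  | .oracle => lookupCode.curry (Encodable.encode τ)
  | .pair f g => .pair (f.instantiate τ) (g.instantiate τ)
  | .comp f g => .comp (f.instantiate τ) (g.instantiate τ)
  | .prec f g => .prec (f.instantiate τ) (g.instantiate τ)
  | .rfind' f => .rfind' (f.instantiate τ)

/-- The course-of-values step computing `(CodeO.ofNat n).instantiate τ` from the list `l` of the
`n` previous values. -/
noncomputable def instantiateStep (τ : List ℕ) (l : List Code) : Code :=
  let n := l.length
  let p := (n - 5) / 4
  if n = 0 then .zero else if n = 1 then .succ else if n = 2 then .left else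
  if n = 3 then .right else if n = 4 then lookupCode.curry (Encodable.encode τ) else
  if (n - 5) % 4 = 0 then .pair (l.getD p.unpair.1 .zero) (l.getD p.unpair.2 .zero) else
  if (n - 5) % 4 = 1 then .prec (l.getD p.unpair.1 .zero) (l.getD p.unpair.2 .zero) else
  if (n - 5) % 4 = 2 then .comp (l.getD p.unpair.1 .zero) (l.getD p.unpair.2 .zero) else
  .rfind' (l.getD p .zero)

theorem primrec_instantiateStep : Primrec₂ instantiateStep := by
  have length : Primrec fun a : List ℕ × List Code => a.2.length :=
    Primrec.list_length.comp Primrec.snd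
  have sub_five := Primrec.nat_sub.comp length (Primrec.const 5)
  have arg := Primrec.nat_div.comp sub_five (Primrec.const 4)
  have tag := Primrec.nat_mod.comp sub_five (Primrec.const 4)
  have unpair := Primrec.unpair.comp arg
  have getD {f : List ℕ × List Code → ℕ} (hf : Primrec f) :
      Primrec fun a : List ℕ × List Code => a.2.getD (f a) .zero :=
    (Primrec.list_getD Code.zero).comp Primrec.snd hf
  have subcode := getD arg
  have fst_subcode := getD (Primrec.fst.comp unpair)
  have snd_subcode := getD (Primrec.snd.comp unpair)
  have eq_const {f : List ℕ × List Code → ℕ} (hf : Primrec f) (k : ℕ) :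
      PrimrecPred fun a => f a = k := Primrec.eq.comp hf (Primrec.const k)
  refine Primrec.ite (eq_const length 0) (Primrec.const _) ?_
  refine Primrec.ite (eq_const length 1) (Primrec.const _) ?_
  refine Primrec.ite (eq_const length 2) (Primrec.const _) ?_
  refine Primrec.ite (eq_const length 3) (Primrec.const _) ?_
  refine Primrec.ite (eq_const length 4) (Code.primrec₂_curry.comp (Primrec.const _)
    (Primrec.encode.comp Primrec.fst)) ?_
  refine Primrec.ite (eq_const tag 0) (Code.primrec₂_pair.comp fst_subcode snd_subcode) ?_
  refine Primrec.ite (eq_const tag 1) (Code.primrec₂_prec.comp fst_subcode snd_subcode) ?_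
  refine Primrec.ite (eq_const tag 2) (Code.primrec₂_comp.comp fst_subcode snd_subcode) ?_
  exact Code.primrec_rfind'.comp subcode

theorem instantiateStep_map_range (τ : List ℕ) (n : ℕ) :
    instantiateStep τ ((List.range n).map fun m => (CodeO.ofNat m).instantiate τ) =
      (CodeO.ofNat n).instantiate τ := by
  have getD {k : ℕ} (hk : k < n) :
      ((List.range n).map fun m => (CodeO.ofNat m).instantiate τ).getD k .zero =
        (CodeO.ofNat k).instantiate τ := by
    simp [List.getD_eq_getElem?_getD, hk]
  match n with
  | 0 | 1 | 2 | 3 | 4 => simp [instantiateStep, CodeO.ofNat, CodeO.instantiate]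
  | n + 5 =>
    have lt : n / 4 < n + 5 := by omega
    have fst_lt : (n / 4).unpair.1 < n + 5 := (Nat.unpair_left_le _).trans_lt lt
    have snd_lt : (n / 4).unpair.2 < n + 5 := (Nat.unpair_right_le _).trans_lt lt
    simp only [instantiateStep, List.length_map, List.length_range, Nat.add_sub_cancel, getD lt,
      getD fst_lt, getD snd_lt, Nat.reduceEqDiff, CodeO.ofNat, Nat.add_eq_zero_iff,
      OfNat.ofNat_ne_zero, and_false, if_false]
    split_ifs <;> first | omega | rfl

theorem primrec_instantiate :
    Primrec₂ fun (τ : List ℕ) (e : ℕ) => (CodeO.ofNat e).instantiate τ :=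
  Primrec.nat_strong_rec _ (g := fun τ l => some (instantiateStep τ l))
    (Primrec.option_some.comp primrec_instantiateStep)
    fun τ n => congrArg some (instantiateStep_map_range τ n)

section Approximates

variable {ι α β : Type*} {l : Filter ι}

/-- The partial values `P i` approximate `p` from below along the filter `l`: each of them is
undefined or equal to `p`, and if `p` is defined then so are eventually all of them. -/
structure Approximates (l : Filter ι) (P : ι → Part α) (p : Part α) : Prop where
  sound : ∀ i, ∀ y ∈ P i, y ∈ p
  eventually_mem : ∀ y ∈ p, ∀ᶠ i in l, y ∈ P i

namespace Approximates

theorem const (l : Filter ι) (p : Part α) : Approximates l (fun _ => p) p :=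
  ⟨fun _ _ hy => hy, fun _ hy => .of_forall fun _ => hy⟩

theorem bind {P : ι → Part α} {p : Part α} {F : ι → α → Part β} {f : α → Part β}
    (hp : Approximates l P p) (hf : ∀ a, Approximates l (F · a) (f a)) :
    Approximates l (fun i => (P i).bind (F i)) (p.bind f) where
  sound i y hy := by
    obtain ⟨a, ha, hy⟩ := Part.mem_bind_iff.1 hy
    exact Part.mem_bind (hp.sound i a ha) ((hf a).sound i y hy)
  eventually_mem y hy := by
    obtain ⟨a, ha, hy⟩ := Part.mem_bind_iff.1 hy
    filter_upwards [hp.eventually_mem a ha, (hf a).eventually_mem y hy] with i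
    exact Part.mem_bind

theorem map {P : ι → Part α} {p : Part α} (f : α → β) (hp : Approximates l P p) :
    Approximates l (fun i => (P i).map f) (p.map f) := by
  simpa only [Part.bind_some_eq_map] using hp.bind fun a => const l (Part.some (f a))

theorem rfind {P : ι → ℕ →. Bool} {p : ℕ →. Bool} (hp : ∀ n, Approximates l (P · n) (p n)) :
    Approximates l (fun i => Nat.rfind (P i)) (Nat.rfind p) where
  sound i n hn := by
    obtain ⟨htrue, hfalse⟩ := Nat.mem_rfind.1 hn
    exact Nat.mem_rfind.2
      ⟨(hp n).sound i _ htrue, fun hm => (hp _).sound i _ (hfalse hm)⟩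
  eventually_mem n hn := by
    obtain ⟨htrue, hfalse⟩ := Nat.mem_rfind.1 hn
    have hfalse : ∀ᶠ i in l, ∀ m ∈ Finset.range n, false ∈ P i m :=
      (eventually_all_finset _).2 fun m hm =>
        (hp m).eventually_mem _ (hfalse (Finset.mem_range.1 hm))
    filter_upwards [(hp n).eventually_mem _ htrue, hfalse] with i htrue hfalse
    exact Nat.mem_rfind.2 ⟨htrue, fun hm => hfalse _ (Finset.mem_range.2 hm)⟩

end Approximates

end Approximates

/-- The list of the first `n` values of an oracle. -/
def oracleSeg (O : ℕ → ℕ) (n : ℕ) : List ℕ := (List.range n).map O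

theorem length_oracleSeg (O : ℕ → ℕ) (n : ℕ) : (oracleSeg O n).length = n := by
  simp only [oracleSeg, List.length_map, List.length_range]

theorem take_oracleSeg (O : ℕ → ℕ) {m n : ℕ} (h : m ≤ n) :
    (oracleSeg O n).take m = oracleSeg O m := by
  rw [oracleSeg, ← List.map_take, List.take_range, min_eq_left h, oracleSeg]

theorem approximates_eval_instantiate (O : ℕ → ℕ) (c : CodeO) (x : ℕ) :
    Approximates atTop (fun n => (c.instantiate (oracleSeg O n)).eval x) (c.eval O x) := by
  induction c generalizing x with
  | zero | succ | left | right => exact .const _ _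
  | oracle =>
    simp only [CodeO.instantiate, CodeO.eval, lookupCode_eval, oracleSeg]
    refine ⟨fun n y hy => ?_, fun y hy => ?_⟩
    · simp only [Part.mem_ofOption, Option.mem_def, List.getElem?_map, Option.map_eq_some_iff,
        List.getElem?_eq_some_iff, List.getElem_range] at hy
      obtain ⟨_, ⟨_, rfl⟩, rfl⟩ := hy
      exact Part.mem_some _
    · filter_upwards [eventually_gt_atTop x] with n hn
      simpa [hn] using hy
  | pair f g hf hg => exact ((hf x).map Nat.pair).bind fun k => (hg x).map k
  | comp f g hf hg => exact (hg x).bind hf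
  | prec f g hf hg =>
    simp only [CodeO.instantiate, Code.eval, CodeO.eval, Nat.unpaired]
    induction x.unpair.2 with
    | zero => exact hf _
    | succ k ih => exact ih.bind fun i => hg _
  | rfind' f hf =>
    exact .map _ (.rfind fun n => (hf _).map _)

section Primrec

variable {α : Type*} [Primcodable α] {R : α → ℕ → Prop} {f : α → ℕ}

theorem primrecPred_exists_lt (hR : PrimrecRel R) (hf : Primrec f) :
    PrimrecPred fun a => ∃ n < f a, R a n :=
  (hR.swap.exists_mem_list.comp (Primrec.list_range.comp hf) Primrec.id).of_eq fun a => by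
    simp only [List.mem_range]; rfl

theorem primrecPred_forall_lt (hR : PrimrecRel R) (hf : Primrec f) :
    PrimrecPred fun a => ∀ n < f a, R a n :=
  (hR.swap.forall_mem_list.comp (Primrec.list_range.comp hf) Primrec.id).of_eq fun a => by
    simp only [List.mem_range]; rfl

theorem primrecPred_isSome_evaln {s : α → ℕ} {c : α → Code} (hs : Primrec s) (hc : Primrec c)
    (hf : Primrec f) : PrimrecPred fun a => (evaln (s a) (c a) (f a)).isSome :=
  Primrec.eq.comp
    (Primrec.option_isSome.comp (Code.primrec_evaln.comp ((hs.pair hc).pair hf)))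
    (Primrec.const true)

theorem primrec_unpair_fst (hf : Primrec f) : Primrec fun a => (f a).unpair.1 :=
  Primrec.fst.comp (Primrec.unpair.comp hf)

theorem primrec_unpair_snd (hf : Primrec f) : Primrec fun a => (f a).unpair.2 :=
  Primrec.snd.comp (Primrec.unpair.comp hf)

theorem primrec_two_pow : Primrec fun n : ℕ => 2 ^ n :=
  (Primrec.nat_rec₁ 1 (f := fun _ k => k * 2)
    (Primrec.nat_mul.comp Primrec.snd (Primrec.const 2))).of_eq fun n => by
      induction n with
      | zero => rfl
      | succ n ih => rw [pow_succ, ← ih]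

end Primrec

/-- The oracle program with index `e` halts on input `x` within `τ.length` steps when some prefix
of `τ` serves as its oracle. Ranging over all prefixes makes the notion monotone in `τ`, since
longer oracle lists give programs that run for more steps. -/
def HaltsWithin (τ : List ℕ) (e x : ℕ) : Prop :=
  ∃ j < τ.length + 1, (evaln τ.length ((CodeO.ofNat e).instantiate (τ.take j)) x).isSome

theorem primrecPred_haltsWithin {α : Type*} [Primcodable α] {τ : α → List ℕ} {e x : α → ℕ}
    (hτ : Primrec τ) (he : Primrec e) (hx : Primrec x) :
    PrimrecPred fun a => HaltsWithin (τ a) (e a) (x a) := by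
  have length := Primrec.list_length.comp hτ
  refine primrecPred_exists_lt ?_ (Primrec.succ.comp length)
  exact primrecPred_isSome_evaln (length.comp Primrec.fst)
    (primrec_instantiate.comp (Primrec.list_take.comp Primrec.snd (hτ.comp Primrec.fst))
      (he.comp Primrec.fst)) (hx.comp Primrec.fst)

theorem isSome_evaln_mono {m n : ℕ} (h : m ≤ n) {c : Code} {x : ℕ}
    (hm : (evaln m c x).isSome) : (evaln n c x).isSome := by
  obtain ⟨y, hy⟩ := Option.isSome_iff_exists.1 hm
  exact Option.isSome_iff_exists.2 ⟨y, Code.evaln_mono h hy⟩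

theorem dom_eval_iff_exists_isSome_evaln {c : Code} {x : ℕ} :
    (c.eval x).Dom ↔ ∃ n, (evaln n c x).isSome := by
  simp only [Part.dom_iff_mem, Code.evaln_complete, Option.isSome_iff_exists, Option.mem_def]
  exact exists_comm

theorem haltsWithin_oracleSeg {O : ℕ → ℕ} {s e x : ℕ} :
    HaltsWithin (oracleSeg O s) e x ↔
      ∃ j ≤ s, (evaln s ((CodeO.ofNat e).instantiate (oracleSeg O j)) x).isSome := by
  simp only [HaltsWithin, length_oracleSeg, Nat.lt_succ_iff]
  refine exists_congr fun j => and_congr_right fun hj => ?_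
  rw [take_oracleSeg O hj]

theorem HaltsWithin.mono {O : ℕ → ℕ} {s t e x : ℕ} (h : HaltsWithin (oracleSeg O s) e x)
    (hst : s ≤ t) : HaltsWithin (oracleSeg O t) e x := by
  obtain ⟨j, hj, h⟩ := haltsWithin_oracleSeg.1 h
  exact haltsWithin_oracleSeg.2 ⟨j, hj.trans hst, isSome_evaln_mono hst h⟩

theorem dom_eval_iff_exists_haltsWithin {O : ℕ → ℕ} {e x : ℕ} :
    ((CodeO.ofNat e).eval O x).Dom ↔ ∃ s, HaltsWithin (oracleSeg O s) e x := by
  have approx := approximates_eval_instantiate O (CodeO.ofNat e) x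
  simp only [haltsWithin_oracleSeg]
  constructor
  · intro h
    obtain ⟨y, hy⟩ := Part.dom_iff_mem.1 h
    obtain ⟨j, hj⟩ := (approx.eventually_mem y hy).exists
    obtain ⟨n, hn⟩ := dom_eval_iff_exists_isSome_evaln.1 (Part.dom_iff_mem.2 ⟨y, hj⟩)
    exact ⟨max j n, j, le_max_left j n, isSome_evaln_mono (le_max_right j n) hn⟩
  · rintro ⟨s, j, -, hs⟩
    obtain ⟨y, hy⟩ := Part.dom_iff_mem.1 (dom_eval_iff_exists_isSome_evaln.2 ⟨s, hs⟩)
    exact Part.dom_iff_mem.2 ⟨y, approx.sound j y hy⟩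

theorem eventually_haltsWithin_iff (O : ℕ → ℕ) (e x : ℕ) :
    ∀ᶠ s in atTop, (HaltsWithin (oracleSeg O s) e x ↔ ((CodeO.ofNat e).eval O x).Dom) := by
  by_cases h : ((CodeO.ofNat e).eval O x).Dom
  · obtain ⟨s, hs⟩ := dom_eval_iff_exists_haltsWithin.1 h
    filter_upwards [eventually_ge_atTop s] with t ht using iff_of_true (hs.mono ht) h
  · exact .of_forall fun s =>
      iff_of_false (fun hs => h (dom_eval_iff_exists_haltsWithin.2 ⟨s, hs⟩)) h

theorem jump_apply (O : ℕ → ℕ) (e : ℕ) :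
    jump O e = if ((CodeO.ofNat e).eval O e).Dom then 1 else 0 := by
  refine if_congr ⟨?_, fun h => ⟨_, CodeO.encode_ofNat e, h⟩⟩ rfl rfl
  rintro ⟨c, rfl, h⟩
  rwa [CodeO.ofNat_encode]

/-- The approximation to the first `n` values of the jump of an oracle that is computed from an
initial segment `τ` of the oracle. -/
noncomputable def jumpApprox (τ : List ℕ) (n : ℕ) : List ℕ :=
  (List.range n).map fun e => if HaltsWithin τ e e then 1 else 0

theorem primrec_jumpApprox : Primrec₂ jumpApprox :=
  Primrec.list_map (Primrec.list_range.comp Primrec.snd)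
    (Primrec.ite (primrecPred_haltsWithin (Primrec.fst.comp Primrec.fst) Primrec.snd Primrec.snd)
      (Primrec.const 1) (Primrec.const 0)).to₂

theorem eventually_jumpApprox_eq (O : ℕ → ℕ) (n : ℕ) :
    ∀ᶠ s in atTop, jumpApprox (oracleSeg O s) n = oracleSeg (jump O) n := by
  have h := (eventually_all_finset (Finset.range n)).2 fun e _ => eventually_haltsWithin_iff O e e
  filter_upwards [h] with s hs
  refine List.map_congr_left fun e he => ?_
  rw [jump_apply]
  exact if_congr (hs e (Finset.mem_range.2 (List.mem_range.1 he))) rfl rfl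

section Filter

variable {ι α : Type*} {l : Filter ι} [l.NeBot] {f : ι → α} {a : α}

theorem eventually_apply_iff_of_eventually_eq (p : α → Prop) (h : ∀ᶠ i in l, f i = a) :
    (∀ᶠ i in l, p (f i)) ↔ p a := by
  rw [eventually_congr (h.mono fun i hi => by rw [hi]), eventually_const]

theorem frequently_apply_iff_of_eventually_eq (p : α → Prop) (h : ∀ᶠ i in l, f i = a) :
    (∃ᶠ i in l, p (f i)) ↔ p a := by
  rw [frequently_congr (h.mono fun i hi => by rw [hi]), frequently_const]

end Filter

/-- `Σ⁰₃` predicates, in the form `∃ n, ∀ᶠ s, ∃ᶠ t, R` with a primitive recursive matrix. -/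
def IsSigmaThree {α : Type*} [Primcodable α] (p : α → Prop) : Prop :=
  ∃ R : α × ℕ × ℕ × ℕ → Prop, PrimrecPred R ∧
    ∀ a, p a ↔ ∃ n, ∀ᶠ s in atTop, ∃ᶠ t in atTop, R (a, n, s, t)

theorem IsSigmaThree.of_iff {α : Type*} [Primcodable α] {p q : α → Prop} (hp : IsSigmaThree p)
    (h : ∀ a, p a ↔ q a) : IsSigmaThree q := by
  obtain ⟨R, hR, hpR⟩ := hp
  exact ⟨R, hR, fun a => (h a).symm.trans (hpR a)⟩

theorem CeIn.isSigmaThree {S : Set ℕ} (hS : CeIn (iterJump 2) S) : IsSigmaThree (· ∈ S) := by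
  obtain ⟨c, rfl⟩ := hS
  refine ⟨fun q => HaltsWithin
    (jumpApprox (jumpApprox (oracleSeg (fun _ => 0) q.2.2.2) q.2.2.1) q.2.1) c.encode q.1, ?_,
    fun a => ?_⟩
  · have n : Primrec fun q : ℕ × ℕ × ℕ × ℕ => q.2.1 := Primrec.fst.comp Primrec.snd
    have s : Primrec fun q : ℕ × ℕ × ℕ × ℕ => q.2.2.1 :=
      Primrec.fst.comp (Primrec.snd.comp Primrec.snd)
    have t : Primrec fun q : ℕ × ℕ × ℕ × ℕ => q.2.2.2 :=
      Primrec.snd.comp (Primrec.snd.comp Primrec.snd)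
    have zeros : Primrec (oracleSeg fun _ => 0) :=
      Primrec.list_map Primrec.list_range (Primrec.const 0).to₂
    exact primrecPred_haltsWithin
      (primrec_jumpApprox.comp (primrec_jumpApprox.comp (zeros.comp t) s) n)
      (Primrec.const _) Primrec.fst
  · change (c.eval (iterJump 2) a).Dom ↔ _
    have stage_iff (n : ℕ) :
        HaltsWithin (oracleSeg (iterJump 2) n) c.encode a ↔ ∀ᶠ s in atTop, ∃ᶠ t in atTop,
          HaltsWithin (jumpApprox (jumpApprox (oracleSeg (fun _ => 0) t) s) n) c.encode a := by
      have first_limit (s : ℕ) := frequently_apply_iff_of_eventually_eq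
        (fun τ => HaltsWithin (jumpApprox τ n) c.encode a) (eventually_jumpApprox_eq (iterJump 0) s)
      have second_limit := eventually_apply_iff_of_eventually_eq
        (HaltsWithin · c.encode a) (eventually_jumpApprox_eq (iterJump 1) n)
      exact second_limit.symm.trans (eventually_congr (.of_forall fun s => (first_limit s).symm))
    rw [← c.ofNat_encode, dom_eval_iff_exists_haltsWithin, c.ofNat_encode]
    exact exists_congr stage_iff

theorem isLeast_setOf_iff {p : ℕ → Prop} {n : ℕ} :
    IsLeast {m | p m} n ↔ p n ∧ ∀ m < n, ¬p m :=
  and_congr_right fun _ => forall_congr' fun _ => by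
    rw [Set.mem_ofPred_eq, ← not_lt]; exact ⟨fun h hlt hp => h hp hlt, fun h hp hlt => h hlt hp⟩

theorem primrecPred_isLeast {α : Type*} [Primcodable α] {R : α → ℕ → Prop} {f : α → ℕ}
    (hR : PrimrecRel R) (hf : Primrec f) : PrimrecPred fun a => IsLeast {n | R a n} (f a) :=
  ((hR.comp Primrec.id hf).and (primrecPred_forall_lt hR.not hf)).of_eq fun _ =>
    isLeast_setOf_iff.symm

theorem exists_unpair_iff {Q : ℕ → ℕ → Prop} :
    (∃ k : ℕ, Q k.unpair.1 k.unpair.2) ↔ ∃ m n, Q m n :=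
  (Nat.surjective_unpair.exists (p := fun q => Q q.1 q.2)).symm.trans Prod.exists

theorem IsSigmaThree.exists_and {α : Type*} [Primcodable α] {r : α → ℕ → Prop} {p : ℕ → Prop}
    (hr : PrimrecRel r) (hp : IsSigmaThree p) : IsSigmaThree fun a => ∃ m, r a m ∧ p m := by
  obtain ⟨R, hR, hpR⟩ := hp
  refine ⟨fun q => r q.1 q.2.1.unpair.1 ∧ R (q.2.1.unpair.1, q.2.1.unpair.2, q.2.2), ?_,
    fun a => ?_⟩
  · have k : Primrec fun q : α × ℕ × ℕ × ℕ => q.2.1 := Primrec.fst.comp Primrec.snd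
    exact (hr.comp Primrec.fst (primrec_unpair_fst k)).and
      (hR.comp ((primrec_unpair_fst k).pair
        ((primrec_unpair_snd k).pair (Primrec.snd.comp Primrec.snd))))
  · simp only [hpR, frequently_and_distrib_left, eventually_and, eventually_const,
      exists_unpair_iff (Q := fun m n => r a m ∧ ∀ᶠ s in atTop, ∃ᶠ t in atTop, R (m, n, s, t)),
      ← exists_and_left]

theorem finite_setOf_unpair {P : ℕ → ℕ → Prop} {K : ℕ} (hlt : ∀ k s, P k s → k < K)
    (huniq : ∀ k s t, P k s → P k t → s = t) : {n : ℕ | P n.unpair.1 n.unpair.2}.Finite := by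
  refine Set.Finite.of_finite_image (f := fun n : ℕ => n.unpair.1)
    ((Set.finite_lt_nat K).subset ?_) fun m hm n hn hmn => ?_
  · rintro _ ⟨n, hn, rfl⟩
    exact hlt _ _ hn
  · rw [← Nat.pair_unpair m, ← Nat.pair_unpair n]
    refine congrArg₂ Nat.pair hmn (huniq n.unpair.1 _ _ ?_ hn)
    rw [← show m.unpair.1 = n.unpair.1 from hmn]
    exact hm

/-- Merges the quantifiers `∀ x, ∃ b` into one `∃ᶠ s`: by antitonicity, a search that fails at one
`x` fails at all larger ones. -/
theorem frequently_isLeast_iff {B : ℕ → ℕ → Prop} (hB : ∀ b, Antitone (B · b)) :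
    (∃ᶠ s : ℕ in atTop, IsLeast {b | B s.unpair.1 b} s.unpair.2) ↔ ∀ x, ∃ b, B x b := by
  rw [Nat.frequently_atTop_iff_infinite]
  constructor
  · intro hinf x
    by_contra hx
    refine hinf (finite_setOf_unpair (P := fun y b => IsLeast {b | B y b} b) (K := x)
      (fun y b hb => lt_of_not_ge fun h => hx ⟨b, hB b h hb.1⟩) fun y b c hb hc => hb.unique hc)
  · intro h
    refine Set.infinite_of_injective_forall_mem
      (f := fun x => Nat.pair x (Nat.find (h x))) (fun x y hxy => (Nat.pair_eq_pair.1 hxy).1) ?_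
    intro x
    simp only [Set.mem_ofPred_eq, Nat.unpair_pair]
    exact ⟨Nat.find_spec (h x), fun b => Nat.find_min' (h x)⟩

theorem forall_ge_frequently_iff {Q : ℕ → ℕ → Prop} {t : ℕ} :
    (∀ x ≥ t, ∃ᶠ y in atTop, Q x y) ↔
      ∀ x, ∃ b, ∀ x' < x, x' < t ∨ ∃ y < b, x ≤ y ∧ Q x' y := by
  simp only [frequently_atTop]
  constructor
  · intro h x
    have hev : ∀ᶠ b in atTop, ∀ x' ∈ Finset.range x,
        x' < t ∨ ∃ y < b, x ≤ y ∧ Q x' y := by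
      refine (eventually_all_finset _).2 fun x' _ => ?_
      obtain hx' | hx' := lt_or_ge x' t
      · exact .of_forall fun _ => .inl hx'
      · obtain ⟨y, hy⟩ := h x' hx' x
        filter_upwards [eventually_gt_atTop y] with b hb using .inr ⟨y, hb, hy⟩
    exact hev.exists.imp fun b hb x' hx' => hb x' (Finset.mem_range.2 hx')
  · intro h x hx N
    obtain ⟨b, hb⟩ := h (max N x + 1)
    obtain ⟨y, -, hy, hQ⟩ := (hb x (by omega)).resolve_left hx.not_gt
    exact ⟨y, by omega, hQ⟩

theorem primrecRel_forall_lt_exists_lt {α : Type*} [Primcodable α] {R : α × ℕ × ℕ × ℕ → Prop}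
    (hR : PrimrecPred R) : PrimrecRel fun (q : α × ℕ × ℕ) (b : ℕ) =>
      ∀ x < q.2.2.unpair.1, x < q.2.1.unpair.2 ∨
        ∃ y < b, q.2.2.unpair.1 ≤ y ∧ R (q.1, q.2.1.unpair.1, x, y) := by
  have q : Primrec fun z : ((α × ℕ × ℕ) × ℕ) × ℕ => z.1.1 := Primrec.fst.comp Primrec.fst
  have q' : Primrec fun z : (((α × ℕ × ℕ) × ℕ) × ℕ) × ℕ => z.1.1.1 := q.comp Primrec.fst
  have bound : Primrec fun q : α × ℕ × ℕ => q.2.2.unpair.1 :=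
    primrec_unpair_fst (Primrec.snd.comp Primrec.snd)
  have k : Primrec fun q : α × ℕ × ℕ => q.2.1 := Primrec.fst.comp Primrec.snd
  have matrix : PrimrecPred fun z : (((α × ℕ × ℕ) × ℕ) × ℕ) × ℕ =>
      z.1.1.1.2.2.unpair.1 ≤ z.2 ∧ R (z.1.1.1.1, z.1.1.1.2.1.unpair.1, z.1.2, z.2) :=
    (Primrec.nat_le.comp (bound.comp q') Primrec.snd).and
      (hR.comp ((Primrec.fst.comp q').pair ((primrec_unpair_fst (k.comp q')).pair
        ((Primrec.snd.comp Primrec.fst).pair Primrec.snd))))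
  exact primrecPred_forall_lt
    ((Primrec.nat_lt.comp Primrec.snd (primrec_unpair_snd (k.comp q))).or
      (primrecPred_exists_lt matrix (Primrec.snd.comp Primrec.fst)))
    (bound.comp Primrec.fst)

theorem IsSigmaThree.exists_frequently {α : Type*} [Primcodable α] {p : α → Prop}
    (hp : IsSigmaThree p) : ∃ T : α × ℕ × ℕ → Prop, PrimrecPred T ∧
      ∀ a, p a ↔ ∃ k, ∃ᶠ s in atTop, T (a, k, s) := by
  obtain ⟨R, hR, hpR⟩ := hp
  let B (a : α) (k x b : ℕ) : Prop := ∀ x' < x, x' < k.unpair.2 ∨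
    ∃ y < b, x ≤ y ∧ R (a, k.unpair.1, x', y)
  refine ⟨fun q => IsLeast {b | B q.1 q.2.1 q.2.2.unpair.1 b} q.2.2.unpair.2,
    primrecPred_isLeast (primrecRel_forall_lt_exists_lt hR)
      (primrec_unpair_snd (Primrec.snd.comp Primrec.snd)), fun a => ?_⟩
  have antitone (k b : ℕ) : Antitone (B a k · b) := fun x z hxz hz x' hx' =>
    (hz x' (hx'.trans_le hxz)).imp_right fun ⟨y, hyb, hzy, hy⟩ => ⟨y, hyb, hxz.trans hzy, hy⟩
  calc p a ↔ ∃ n t, ∀ x ≥ t, ∃ᶠ y in atTop, R (a, n, x, y) := by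
        simp only [hpR, eventually_atTop]
    _ ↔ ∃ k : ℕ, ∀ x ≥ k.unpair.2, ∃ᶠ y in atTop, R (a, k.unpair.1, x, y) :=
        (exists_unpair_iff (Q := fun n t => ∀ x ≥ t, ∃ᶠ y in atTop, R (a, n, x, y))).symm
    _ ↔ _ := exists_congr fun k =>
        forall_ge_frequently_iff.trans (frequently_isLeast_iff (antitone k)).symm

theorem exists_codeO_of_primrec {f : ℕ → ℕ} (hf : Primrec f) :
    ∃ c : CodeO, ∀ O n, c.eval O n = Part.some (f n) := by
  obtain ⟨c, hc⟩ := exists_codeO_of_partrec (Partrec.nat_iff.1 hf.to_comp)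
  exact ⟨c, fun O n => congrFun (hc O) n⟩

theorem CodeO.eval_pair_eq_some {O : ℕ → ℕ} {f g : CodeO} {x a b : ℕ}
    (hf : f.eval O x = Part.some a) (hg : g.eval O x = Part.some b) :
    (CodeO.pair f g).eval O x = Part.some (Nat.pair a b) := by
  simp [CodeO.eval, hf, hg, Seq.seq]

theorem CodeO.eval_comp_of_eq_some {O : ℕ → ℕ} {g : CodeO} {x a : ℕ}
    (hg : g.eval O x = Part.some a) (f : CodeO) : (CodeO.comp f g).eval O x = f.eval O a := by
  change (g.eval O x).bind (fun n => f.eval O n) = _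
  rw [hg, Part.bind_some]

theorem CodeO.eval_prec_zero (O : ℕ → ℕ) (f g : CodeO) (a : ℕ) :
    (CodeO.prec f g).eval O (Nat.pair a 0) = f.eval O a := by
  simp [eval, Nat.unpaired]

theorem CodeO.eval_prec_succ (O : ℕ → ℕ) (f g : CodeO) (a n : ℕ) :
    (CodeO.prec f g).eval O (Nat.pair a (n + 1)) =
      ((CodeO.prec f g).eval O (Nat.pair a n)).bind
        fun i => g.eval O (Nat.pair a (Nat.pair n i)) := by
  simp [eval, Nat.unpaired]

theorem CodeO.dom_eval_rfind'_iff {O : ℕ → ℕ} {f : CodeO} {a : ℕ} {h : ℕ → ℕ}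
    (hf : ∀ n, f.eval O (Nat.pair a n) = Part.some (h n)) :
    ((CodeO.rfind' f).eval O (Nat.pair a 0)).Dom ↔ ∃ n, h n = 0 := by
  simp only [eval, Nat.unpaired, Nat.unpair_pair, Nat.add_zero, hf, Part.map_eq_map,
    Part.map_some, Part.map_Dom]
  exact Nat.rfind_dom.trans (by simp)

theorem oracleSeg_succ (O : ℕ → ℕ) (n : ℕ) : oracleSeg O (n + 1) = oracleSeg O n ++ [O n] := by
  simp only [oracleSeg, List.range_succ, List.map_append, List.map_singleton]

theorem exists_codeO_encode_oracleSeg :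
    ∃ c : CodeO, ∀ O x s, c.eval O (Nat.pair x s) =
      Part.some (Encodable.encode (oracleSeg O s)) := by
  have primrec_concat : Primrec fun n : ℕ =>
      Encodable.encode ((Encodable.decode (α := List ℕ) n.unpair.1).getD [] ++ [n.unpair.2]) :=
    Primrec.encode.comp (Primrec.list_concat.comp
      (Primrec.option_getD.comp (Primrec.decode.comp (primrec_unpair_fst Primrec.id))
        (Primrec.const []))
      (primrec_unpair_snd Primrec.id))
  obtain ⟨concat, hconcat⟩ := exists_codeO_of_primrec primrec_concat
  let step : CodeO := .comp concat
    (.pair (.comp .right .right) (.comp .oracle (.comp .left .right)))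
  refine ⟨.prec .zero step, fun O x s => ?_⟩
  have hstep (s : ℕ) (l : List ℕ) :
      step.eval O (Nat.pair x (Nat.pair s (Encodable.encode l))) =
        Part.some (Encodable.encode (l ++ [O s])) := by
    have hargs : (CodeO.pair (.comp .right .right) (.comp .oracle (.comp .left .right))).eval O
        (Nat.pair x (Nat.pair s (Encodable.encode l))) =
          Part.some (Nat.pair (Encodable.encode l) (O s)) := by
      refine CodeO.eval_pair_eq_some ((CodeO.eval_comp_of_eq_some rfl _).trans ?_)
        ((CodeO.eval_comp_of_eq_some (CodeO.eval_comp_of_eq_some rfl _) _).trans ?_) <;>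
      simp [CodeO.eval]
    rw [CodeO.eval_comp_of_eq_some hargs, hconcat]
    simp
  induction s with
  | zero => exact CodeO.eval_prec_zero O _ _ x
  | succ s ih => rw [CodeO.eval_prec_succ, ih, Part.bind_some, hstep, oracleSeg_succ]

theorem exists_codeO_dom_iff {R : List ℕ × ℕ → Prop} (hR : PrimrecPred R) :
    ∃ c : CodeO, ∀ O x, (c.eval O x).Dom ↔ ∃ s, R (oracleSeg O s, x) := by
  have primrec_test : Primrec fun n : ℕ =>
      if R ((Encodable.decode (α := List ℕ) n.unpair.1).getD [], n.unpair.2) then 0 else 1 :=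
    Primrec.ite (hR.comp ((Primrec.option_getD.comp
      (Primrec.decode.comp (primrec_unpair_fst Primrec.id)) (Primrec.const [])).pair
        (primrec_unpair_snd Primrec.id))) (Primrec.const 0) (Primrec.const 1)
  obtain ⟨test, htest⟩ := exists_codeO_of_primrec primrec_test
  obtain ⟨seg, hseg⟩ := exists_codeO_encode_oracleSeg
  let search : CodeO := .comp test (.pair seg .left)
  refine ⟨.comp (.rfind' search) (.pair (.pair .left .right) .zero), fun O x => ?_⟩
  have hsearch (s : ℕ) : search.eval O (Nat.pair x s) =
      Part.some (if R (oracleSeg O s, x) then 0 else 1) := by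
    rw [CodeO.eval_comp_of_eq_some (CodeO.eval_pair_eq_some (hseg O x s) rfl), htest]
    simp
  have hargs : (CodeO.pair (.pair .left .right) .zero).eval O x = Part.some (Nat.pair x 0) := by
    rw [CodeO.eval_pair_eq_some (CodeO.eval_pair_eq_some rfl rfl) rfl, Nat.pair_unpair]
  rw [CodeO.eval_comp_of_eq_some hargs, CodeO.dom_eval_rfind'_iff hsearch]
  simp

theorem length_initSeg (X : Cantor) (n : ℕ) : (initSeg X n).length = n := by
  simp only [initSeg, List.length_map, List.length_range]

theorem take_initSeg (X : Cantor) {m n : ℕ} (h : m ≤ n) :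
    (initSeg X n).take m = initSeg X m := by
  rw [initSeg, ← List.map_take, List.take_range, min_eq_left h, initSeg]

theorem exists_machine_dom_iff {R : List Bool × ℕ → Prop} (hR : PrimrecPred R) :
    ∃ M : CodeO, ∀ X n, n ∈ domSet M X ↔ ∃ w, R (initSeg X w, n) := by
  have toBools : Primrec fun τ : List ℕ => τ.map fun a => decide (a = 1) :=
    Primrec.list_map Primrec.id
      (Primrec.eq.decide.comp Primrec.snd (Primrec.const 1)).to₂
  obtain ⟨M, hM⟩ := exists_codeO_dom_iff
    (hR.comp ((toBools.comp Primrec.fst).pair Primrec.snd))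
  refine ⟨M, fun X n => (hM (oX X) n).trans (exists_congr fun w => ?_)⟩
  have toBools_oracleSeg : (oracleSeg (oX X) w).map (fun a => decide (a = 1)) = initSeg X w := by
    rw [oracleSeg, List.map_map]
    refine List.map_congr_left fun i _ => ?_
    cases h : X i <;> simp [oX, h]
  rw [toBools_oracleSeg]

/-- The program with index `k` halts on input `0` within `s` steps. -/
def HaltsBy (k s : ℕ) : Prop := (evaln s (Denumerable.ofNat Code k) 0).isSome

theorem primrecRel_haltsBy : PrimrecRel HaltsBy :=
  primrecPred_isSome_evaln Primrec.snd ((Primrec.ofNat Code).comp Primrec.fst) (Primrec.const 0)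

theorem not_haltsBy_of_computable {L : ℕ → ℕ} (hL : Computable L) :
    ¬∀ k, (∃ s, HaltsBy k s) → HaltsBy k (L k) := by
  intro h
  refine ComputablePred.halting_problem 0 (ComputablePred.computable_iff.2
    ⟨fun c => (evaln (L (Encodable.encode c)) c 0).isSome, ?_, funext fun c => propext ?_⟩)
  · exact Primrec.option_isSome.to_comp.comp (Code.primrec_evaln.to_comp.comp
      (((hL.comp Computable.encode).pair Computable.id).pair (Computable.const 0)))
  · have halts := h (Encodable.encode c)
    simp only [HaltsBy, Denumerable.ofNat_encode] at halts
    exact dom_eval_iff_exists_isSome_evaln.trans ⟨halts, fun hs => ⟨_, hs⟩⟩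

theorem computable_of_computablePred_graph {L : ℕ → ℕ}
    (hL : ComputablePred fun n : ℕ => L n.unpair.1 = n.unpair.2) : Computable L := by
  obtain ⟨f, hf, hLf⟩ := ComputablePred.computable_iff.1 hL
  have graph (k s : ℕ) : L k = s ↔ f (Nat.pair k s) := by
    simpa only [Nat.unpair_pair] using iff_of_eq (congrFun hLf (Nat.pair k s))
  have search : Partrec fun k : ℕ => Nat.rfind fun s => Part.some (f (Nat.pair k s)) :=
    Partrec.rfind (hf.comp (Primrec₂.natPair.to_comp.comp Computable.fst Computable.snd)).partrec
  refine search.of_eq fun k => Part.eq_some_iff.2 (Nat.mem_rfind.2 ⟨?_, fun {s} hs => ?_⟩)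
  · exact Part.mem_some_iff.2 ((graph k (L k)).1 rfl).symm
  · refine Part.mem_some_iff.2 (Eq.symm (Bool.eq_false_iff.2 fun h => ?_))
    exact hs.ne ((graph k s).2 h).symm

theorem computablePred_of_finite_compl {S : Set ℕ} (h : Sᶜ.Finite) :
    ComputablePred fun n => n ∈ S := by
  have mem_list : PrimrecPred fun n : ℕ => ∃ m ∈ h.toFinset.toList, m = n :=
    (Primrec.eq (α := ℕ)).exists_mem_list.comp (Primrec.const _) Primrec.id
  exact (mem_list.not.of_eq fun n => by simp).computablePred

/-- For a relation `E k s`, read as "column `k` has an event at stage `s`", the set of all pairs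
`⟨k, s⟩` such that `s` is the stage of the last event of column `k`. -/
def lastEvents (E : ℕ → ℕ → Prop) : Set ℕ := {n | IsGreatest {s | E n.unpair.1 s} n.unpair.2}

section LastEvents

variable {E : ℕ → ℕ → Prop}

theorem finite_lastEvents (h : ∀ᶠ k in atTop, ∃ᶠ s in atTop, E k s) : (lastEvents E).Finite := by
  obtain ⟨K, hK⟩ := eventually_atTop.1 h
  refine finite_setOf_unpair (P := fun k s => IsGreatest {s | E k s} s) (K := K)
    (fun k s hs => lt_of_not_ge fun hk => ?_) fun k s t hs ht => hs.unique ht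
  obtain ⟨t, hst, ht⟩ := frequently_atTop.1 (hK k hk) (s + 1)
  exact (Nat.lt_of_succ_le hst).not_ge (hs.2 ht)

/-- The stage of the last event of column `k` bounds the halting time of the `k`-th program. -/
theorem not_computablePred_lastEvents (hne : ∀ k, ∃ s, E k s)
    (hfin : ∀ k, ∀ᶠ s in atTop, ¬E k s) (hhalt : ∀ k s, IsLeast {s | HaltsBy k s} s → E k s) :
    ¬ComputablePred fun n => n ∈ lastEvents E := by
  have last (k : ℕ) : ∃ s, IsGreatest {s | E k s} s := by
    obtain ⟨N, hN⟩ := eventually_atTop.1 (hfin k)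
    exact BddAbove.exists_isGreatest_of_nonempty
      ⟨N, fun s hs => le_of_not_ge fun h => hN s h hs⟩ (hne k)
  choose L hL using last
  intro hcomp
  have graph (n : ℕ) : n ∈ lastEvents E ↔ L n.unpair.1 = n.unpair.2 :=
    ⟨fun hn => (hL _).unique hn, fun hn => by rw [lastEvents, Set.mem_ofPred_eq, ← hn]; exact hL _⟩
  refine not_haltsBy_of_computable
    (computable_of_computablePred_graph (hcomp.of_eq graph)) fun k hk => ?_
  have least : IsLeast {s | HaltsBy k s} (Nat.find hk) :=
    ⟨Nat.find_spec hk, fun s hs => Nat.find_min' hk hs⟩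
  exact isSome_evaln_mono ((hL k).2 (hhalt k _ least)) least.1

end LastEvents

theorem mem_compl_lastEvents_iff {E : ℕ → ℕ → Prop} {n : ℕ} :
    n ∈ (lastEvents E)ᶜ ↔ (E n.unpair.1 n.unpair.2 → ∃ t, n.unpair.2 < t ∧ E n.unpair.1 t) := by
  simp only [lastEvents, Set.mem_compl_iff, Set.mem_ofPred_eq, IsGreatest, mem_upperBounds,
    not_and, not_forall, not_le, exists_prop, and_comm]

section Machine

variable {E : List Bool × ℕ × ℕ → Prop}

/-- The string `σ` is incompatible with `ρ`, and with oracle `σ` one sees within `|σ|` stages that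
`n = ⟨k, s⟩` does not name the last event of column `k`. Here `E (τ, k, s)` says that column `k`
has an event at stage `s`, as decided by the initial segment `τ` of length `k` of the oracle. -/
def SeesNotLast (E : List Bool × ℕ × ℕ → Prop) (ρ σ : List Bool) (n : ℕ) : Prop :=
  (ρ.length ≤ σ.length ∧ σ.take ρ.length ≠ ρ) ∧ n.unpair.1 ≤ σ.length ∧
    (E (σ.take n.unpair.1, n.unpair.1, n.unpair.2) →
      ∃ t < σ.length, n.unpair.2 < t ∧ E (σ.take n.unpair.1, n.unpair.1, t))

theorem primrecRel_seesNotLast (hE : PrimrecPred E) (ρ : List Bool) :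
    PrimrecRel (SeesNotLast E ρ) := by
  have length : Primrec fun q : List Bool × ℕ => q.1.length :=
    Primrec.list_length.comp Primrec.fst
  have k : Primrec fun q : List Bool × ℕ => q.2.unpair.1 := primrec_unpair_fst Primrec.snd
  have s : Primrec fun q : List Bool × ℕ => q.2.unpair.2 := primrec_unpair_snd Primrec.snd
  have seg : Primrec fun q : List Bool × ℕ => q.1.take q.2.unpair.1 :=
    Primrec.list_take.comp k Primrec.fst
  have now : PrimrecPred fun q : List Bool × ℕ =>
      E (q.1.take q.2.unpair.1, q.2.unpair.1, q.2.unpair.2) := hE.comp (seg.pair (k.pair s))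
  have later : PrimrecRel fun (q : List Bool × ℕ) (t : ℕ) =>
      q.2.unpair.2 < t ∧ E (q.1.take q.2.unpair.1, q.2.unpair.1, t) :=
    (Primrec.nat_lt.comp (s.comp Primrec.fst) Primrec.snd).and
      (hE.comp ((seg.comp Primrec.fst).pair ((k.comp Primrec.fst).pair Primrec.snd)))
  have incompatible : PrimrecPred fun q : List Bool × ℕ =>
      ρ.length ≤ q.1.length ∧ q.1.take ρ.length ≠ ρ :=
    (Primrec.nat_le.comp (Primrec.const _) length).and
      (Primrec.eq.comp (Primrec.list_take.comp (Primrec.const _) Primrec.fst)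
        (Primrec.const ρ)).not
  have notLast := now.not.or (primrecPred_exists_lt later length)
  exact (incompatible.and ((Primrec.nat_le.comp k length).and notLast)).of_eq fun q => by
    rw [SeesNotLast, imp_iff_not_or]

theorem exists_seesNotLast_initSeg_iff {ρ : List Bool} {X : Cantor} {n : ℕ} :
    (∃ w, SeesNotLast E ρ (initSeg X w) n) ↔
      ¬Extends X ρ ∧ n ∈ (lastEvents fun k s => E (initSeg X k, k, s))ᶜ := by
  have at_length {w : ℕ} (hρ : ρ.length ≤ w) (hn : n.unpair.1 ≤ w) :
      SeesNotLast E ρ (initSeg X w) n ↔ ¬Extends X ρ ∧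
        (E (initSeg X n.unpair.1, n.unpair.1, n.unpair.2) →
          ∃ t < w, n.unpair.2 < t ∧ E (initSeg X n.unpair.1, n.unpair.1, t)) := by
    simp only [SeesNotLast, length_initSeg, take_initSeg X hρ, take_initSeg X hn, hρ, hn,
      true_and, Extends, ne_eq]
  rw [mem_compl_lastEvents_iff]
  constructor
  · rintro ⟨w, hw⟩
    have hρ := hw.1.1
    have hn := hw.2.1
    rw [length_initSeg] at hρ hn
    obtain ⟨hX, hlast⟩ := (at_length hρ hn).1 hw
    exact ⟨hX, fun h => (hlast h).imp fun t ht => ht.2⟩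
  · rintro ⟨hX, hlast⟩
    by_cases h : E (initSeg X n.unpair.1, n.unpair.1, n.unpair.2)
    · obtain ⟨t, ht⟩ := hlast h
      exact ⟨ρ.length + n.unpair.1 + (t + 1), (at_length (by omega) (by omega)).2
        ⟨hX, fun _ => ⟨t, by omega, ht⟩⟩⟩
    · exact ⟨ρ.length + n.unpair.1, (at_length (by omega) (by omega)).2
        ⟨hX, fun h' => absurd h' h⟩⟩

theorem exists_machine_domSet_eq (hE : PrimrecPred E) (ρ : List Bool) :
    ∃ M : CodeO, ∀ X, domSet M X =
      if Extends X ρ then ∅ else (lastEvents fun k s => E (initSeg X k, k, s))ᶜ := by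
  obtain ⟨M, hM⟩ := exists_machine_dom_iff (primrecRel_seesNotLast hE ρ)
  refine ⟨M, fun X => Set.ext fun n => (hM X n).trans (exists_seesNotLast_initSeg_iff.trans ?_)⟩
  by_cases hX : Extends X ρ <;> simp [hX]

end Machine

/-- The events of column `k`, decided by an initial segment `σ` of the oracle of length at least
`k`: there is one at stage `0`, one whenever some `⟨m, i⟩ ≤ k` makes progress towards
`∃ᶠ s, T (σ.take m, i, s)`, and one when the `k`-th program halts. -/
def Event (T : List Bool × ℕ × ℕ → Prop) (q : List Bool × ℕ × ℕ) : Prop :=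
  q.2.2 = 0 ∨ (∃ j < q.2.1 + 1, T (q.1.take j.unpair.1, j.unpair.2, q.2.2)) ∨
    IsLeast {s | HaltsBy q.2.1 s} q.2.2

theorem primrecPred_event {T : List Bool × ℕ × ℕ → Prop} (hT : PrimrecPred T) :
    PrimrecPred (Event T) := by
  have k : Primrec fun q : List Bool × ℕ × ℕ => q.2.1 := Primrec.fst.comp Primrec.snd
  have s : Primrec fun q : List Bool × ℕ × ℕ => q.2.2 := Primrec.snd.comp Primrec.snd
  have progress : PrimrecRel fun (q : List Bool × ℕ × ℕ) (j : ℕ) =>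
      T (q.1.take j.unpair.1, j.unpair.2, q.2.2) :=
    hT.comp ((Primrec.list_take.comp (primrec_unpair_fst Primrec.snd)
      (Primrec.fst.comp Primrec.fst)).pair
        ((primrec_unpair_snd Primrec.snd).pair (s.comp Primrec.fst)))
  exact (Primrec.eq.comp s (Primrec.const 0)).or
    ((primrecPred_exists_lt progress (Primrec.succ.comp k)).or
      (primrecPred_isLeast (primrecRel_haltsBy.comp (k.comp Primrec.fst) Primrec.snd) s))

section Event

variable {T : List Bool × ℕ × ℕ → Prop} {W : Set (List Bool)} {X : Cantor}

theorem mem_cyl_iff_exists_unpair (hT : ∀ σ, σ ∈ W ↔ ∃ i, ∃ᶠ s in atTop, T (σ, i, s)) :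
    X ∈ cyl W ↔ ∃ j : ℕ, ∃ᶠ s in atTop, T (initSeg X j.unpair.1, j.unpair.2, s) := by
  rw [exists_unpair_iff (Q := fun m i => ∃ᶠ s in atTop, T (initSeg X m, i, s))]
  exact exists_congr fun m => hT (initSeg X m)

theorem take_unpair_fst_initSeg {j k : ℕ} (h : j ≤ k) :
    (initSeg X k).take j.unpair.1 = initSeg X j.unpair.1 :=
  take_initSeg X ((Nat.unpair_left_le j).trans h)

theorem eventually_frequently_event (hT : ∀ σ, σ ∈ W ↔ ∃ i, ∃ᶠ s in atTop, T (σ, i, s))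
    (hX : X ∈ cyl W) : ∀ᶠ k in atTop, ∃ᶠ s in atTop, Event T (initSeg X k, k, s) := by
  obtain ⟨j, hj⟩ := (mem_cyl_iff_exists_unpair hT).1 hX
  filter_upwards [eventually_ge_atTop j] with k hk
  refine hj.mono fun s hs => .inr (.inl ⟨j, Nat.lt_succ_of_le hk, ?_⟩)
  rwa [take_unpair_fst_initSeg hk]

theorem eventually_not_event (hT : ∀ σ, σ ∈ W ↔ ∃ i, ∃ᶠ s in atTop, T (σ, i, s))
    (hX : X ∉ cyl W) (k : ℕ) : ∀ᶠ s in atTop, ¬Event T (initSeg X k, k, s) := by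
  have no_progress : ∀ᶠ s in atTop, ∀ j ∈ Finset.range (k + 1),
      ¬T (initSeg X j.unpair.1, j.unpair.2, s) :=
    (eventually_all_finset _).2 fun j _ =>
      not_frequently.1 fun hj => hX ((mem_cyl_iff_exists_unpair hT).2 ⟨j, hj⟩)
  have no_halt : ∀ᶠ s in atTop, ¬IsLeast {t | HaltsBy k t} s := by
    by_cases h : ∃ s, IsLeast {t | HaltsBy k t} s
    · obtain ⟨s, hs⟩ := h
      filter_upwards [eventually_gt_atTop s] with t hst ht using hst.ne (hs.unique ht)
    · exact .of_forall fun s hs => h ⟨s, hs⟩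
  filter_upwards [eventually_gt_atTop 0, no_progress, no_halt] with s hs hT' hhalt
  rintro (h | ⟨j, hj, hjs⟩ | h)
  · exact hs.ne' h
  · refine hT' j (Finset.mem_range.2 hj) ?_
    rwa [← take_unpair_fst_initSeg (Nat.le_of_lt_succ hj)]
  · exact hhalt h

end Event

theorem exists_machine_of_isSigmaThree {W : Set (List Bool)} (hW : IsSigmaThree (· ∈ W))
    (ρ : List Bool) : ∃ M : CodeO, (∀ X, Extends X ρ → domSet M X = ∅) ∧
      (∀ X ∈ cyl W, ¬Extends X ρ → X ∈ COF M) ∧ ∀ X ∉ cyl W, ¬Extends X ρ → X ∉ COM M := by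
  obtain ⟨T, hT, hWT⟩ := hW.exists_frequently
  obtain ⟨M, hM⟩ := exists_machine_domSet_eq (primrecPred_event hT) ρ
  refine ⟨M, fun X hX => by rw [hM, if_pos hX], fun X hXW hX => ?_, fun X hXW hX h => ?_⟩
  · change (domSet M X)ᶜ.Finite
    rw [hM, if_neg hX, compl_compl]
    exact finite_lastEvents (eventually_frequently_event hWT hXW)
  · change ComputablePred fun n => n ∈ domSet M X at h
    rw [hM, if_neg hX] at h
    exact not_computablePred_lastEvents (fun k => ⟨0, .inl rfl⟩) (eventually_not_event hWT hXW)
      (fun k s hs => .inr (.inr hs)) (h.not.of_eq fun n => not_not)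

theorem cof_subset_com (M : CodeO) : COF M ⊆ COM M := fun _ => computablePred_of_finite_compl

theorem notMem_cof_of_domSet_eq_empty {M : CodeO} {X : Cantor} (h : domSet M X = ∅) :
    X ∉ COF M := by
  rw [COF, Set.mem_ofPred_eq, h, Set.compl_empty]
  exact Set.infinite_univ

theorem mem_com_of_domSet_eq_empty {M : CodeO} {X : Cantor} (h : domSet M X = ∅) : X ∈ COM M := by
  rw [COM, Set.mem_ofPred_eq, h]
  exact ComputablePred.computable_iff.2 ⟨fun _ => false, .const _, by simp⟩

theorem exists_machine_cof_com_eq {W : Set (List Bool)} (hW : IsSigmaThree (· ∈ W))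
    (ρ : List Bool) : ∃ M : CodeO, (∀ X, Extends X ρ → ∀ n, ¬(evalO X M n).Dom) ∧
      COF M = cyl W \ {X | Extends X ρ} ∧ COM M = cyl W ∪ {X | Extends X ρ} := by
  obtain ⟨M, empty, cofinite, not_computable⟩ := exists_machine_of_isSigmaThree hW ρ
  refine ⟨M, fun X hX => Set.eq_empty_iff_forall_notMem.1 (empty X hX),
    Set.ext fun X => ?_, Set.ext fun X => ?_⟩
  · by_cases hX : Extends X ρ
    · exact iff_of_false (notMem_cof_of_domSet_eq_empty (empty X hX)) fun h => h.2 hX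
    · refine ⟨fun h => ⟨?_, hX⟩, fun h => cofinite X h.1 hX⟩
      exact by_contra fun hXW => not_computable X hXW hX (cof_subset_com M h)
  · by_cases hX : Extends X ρ
    · exact iff_of_true (mem_com_of_domSet_eq_empty (empty X hX)) (.inr hX)
    · refine ⟨fun h => .inl (by_contra fun hXW => not_computable X hXW hX h), fun h => ?_⟩
      exact cof_subset_com M (cofinite X (h.resolve_right hX) hX)

/-- The natural number with binary expansion `σ`, most significant bit first. -/
def binaryVal (σ : List Bool) : ℕ := σ.foldl (fun a b => 2 * a + b.toNat) 0

theorem binaryVal_concat (σ : List Bool) (b : Bool) :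
    binaryVal (σ ++ [b]) = 2 * binaryVal σ + b.toNat := by
  rw [binaryVal, List.foldl_append, List.foldl_cons, List.foldl_nil, binaryVal]

theorem binaryVal_replicate_false (c : ℕ) : binaryVal (List.replicate c false) = 0 := by
  induction c with
  | zero => rfl
  | succ c ih => rw [List.replicate_succ', binaryVal_concat, ih, Bool.toNat_false]

theorem binaryVal_replicate_true_add_one (c : ℕ) :
    binaryVal (List.replicate c true) + 1 = 2 ^ c := by
  induction c with
  | zero => rfl
  | succ c ih => rw [List.replicate_succ', binaryVal_concat, Bool.toNat_true, pow_succ]; omega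

theorem primrec_binaryVal : Primrec binaryVal :=
  Primrec.list_foldl Primrec.id (Primrec.const 0) (Primrec.nat_add.comp
    (Primrec.nat_mul.comp (Primrec.const 2) (Primrec.fst.comp Primrec.snd))
    ((Primrec.dom_finite Bool.toNat).comp (Primrec.snd.comp Primrec.snd))).to₂

theorem initSeg_succ (X : Cantor) (n : ℕ) : initSeg X (n + 1) = initSeg X n ++ [X n] := by
  simp only [initSeg, List.range_succ, List.map_append, List.map_singleton]

theorem binaryVal_initSeg_digits {x : ℝ} (hx : x ∈ Set.Ico (0 : ℝ) 1) (n : ℕ) :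
    (binaryVal (initSeg (digits x) n) : ℤ) = ⌊x * 2 ^ n⌋ := by
  induction n with
  | zero =>
    rw [pow_zero, mul_one, Int.floor_eq_zero_iff.2 hx]
    rfl
  | succ n ih =>
    have half : ⌊x * 2 ^ n⌋ = ⌊x * 2 ^ (n + 1)⌋ / 2 := by
      rw [← Nat.cast_ofNat (R := ℤ), ← Int.floor_div_natCast, Nat.cast_ofNat, pow_succ,
        ← mul_assoc, mul_div_cancel_right₀ _ two_ne_zero]
    have last_bit : ((digits x n).toNat : ℤ) = ⌊x * 2 ^ (n + 1)⌋ % 2 := by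
      rw [digits, Bool.toNat, Bool.cond_decide]
      split_ifs <;> omega
    rw [initSeg_succ, binaryVal_concat]
    push_cast
    rw [ih, half, last_bit, Int.mul_ediv_add_emod]

theorem mem_Ico_of_extends_digits {x : ℝ} (hx : x ∈ Set.Ico (0 : ℝ) 1) {σ : List Bool}
    (h : Extends (digits x) σ) :
    x ∈ Set.Ico ((binaryVal σ : ℝ) / 2 ^ σ.length) ((binaryVal σ + 1) / 2 ^ σ.length) := by
  have floor_eq : (binaryVal σ : ℝ) = ⌊x * 2 ^ σ.length⌋ := by
    rw [← binaryVal_initSeg_digits hx, show initSeg (digits x) σ.length = σ from h,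
      Int.cast_natCast]
  rw [floor_eq]
  exact ⟨(div_le_iff₀ (by positivity)).2 (Int.floor_le _),
    (lt_div_iff₀ (by positivity)).2 (Int.lt_floor_add_one _)⟩

theorem extends_initSeg (X : Cantor) (n : ℕ) : Extends X (initSeg X n) := by
  rw [Extends, length_initSeg]

/-- The strings whose cylinder, read as the dyadic interval `[N / 2ⁿ, (N + 1) / 2ⁿ)`, has its
right endpoint below `α`. -/
def stringsBelow (α : ℝ) : Set (List Bool) := {σ | ((binaryVal σ : ℝ) + 1) / 2 ^ σ.length < α}

theorem digits_mem_cyl_stringsBelow_iff {x α : ℝ} (hx : x ∈ Set.Ico (0 : ℝ) 1) :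
    digits x ∈ cyl (stringsBelow α) ↔ x < α := by
  have bounds (n : ℕ) := mem_Ico_of_extends_digits hx (extends_initSeg (digits x) n)
  constructor
  · rintro ⟨n, hn⟩
    exact (bounds n).2.trans hn
  · intro h
    obtain ⟨n, hn⟩ := exists_pow_lt_of_lt_one (sub_pos.2 h) (by norm_num : (2 : ℝ)⁻¹ < 1)
    refine ⟨n, ?_⟩
    have lower := (bounds n).1
    rw [length_initSeg] at lower
    rw [stringsBelow, Set.mem_ofPred_eq, length_initSeg, add_div, one_div, ← inv_pow]
    linarith

/-- Rationals are coded as `⟨z, d⟩` for a denominator `d` and a code `z` of the numerator, the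
integers `n` and `-(n + 1)` being coded by `2 * n` and `2 * n + 1`. -/
theorem natCast_div_le_rat_iff {a d : ℕ} (hd : 0 < d) (q : ℚ) :
    (a : ℝ) / d ≤ q ↔ (Encodable.encode q).unpair.1 % 2 = 0 ∧
      a * (Encodable.encode q).unpair.2 ≤ (Encodable.encode q).unpair.1 / 2 * d := by
  rw [show Encodable.encode q = Nat.pair (Encodable.encode q.num) q.den from rfl, Nat.unpair_pair,
    Rat.cast_def, div_le_div_iff₀ (Nat.cast_pos.2 hd) (Nat.cast_pos.2 q.den_pos)]
  rcases q.num with n | n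
  · rw [show Encodable.encode (Int.ofNat n) = 2 * n from rfl, Nat.mul_mod_right,
      Nat.mul_div_cancel_left n two_pos, Int.ofNat_eq_natCast, Int.cast_natCast,
      and_iff_right rfl]
    exact_mod_cast Iff.rfl
  · rw [show Encodable.encode (Int.negSucc n) = 2 * n + 1 from rfl]
    refine iff_of_false (not_le.2 ?_) (by omega)
    calc ((Int.negSucc n : ℤ) : ℝ) * d < 0 :=
          mul_neg_of_neg_of_pos (Int.cast_lt_zero.2 (Int.negSucc_lt_zero n)) (Nat.cast_pos.2 hd)
      _ ≤ a * q.den := by positivity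

theorem mem_stringsBelow_iff_exists_rat {α : ℝ} {σ : List Bool} :
    σ ∈ stringsBelow α ↔
      ∃ q : ℚ, (((binaryVal σ + 1 : ℕ) : ℝ) / (2 ^ σ.length : ℕ) ≤ q) ∧ (q : ℝ) < α := by
  rw [stringsBelow, Set.mem_ofPred_eq]
  push_cast
  refine ⟨fun h => ⟨(binaryVal σ + 1) / 2 ^ σ.length, ?_, ?_⟩,
    fun ⟨q, hle, hlt⟩ => hle.trans_lt hlt⟩
  · push_cast; exact le_rfl
  · push_cast; exact h

theorem isSigmaThree_stringsBelow {α : ℝ} (hα : LeftCeIn (iterJump 2) α) :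
    IsSigmaThree (· ∈ stringsBelow α) := by
  let below (σ : List Bool) (m : ℕ) : Prop := m.unpair.1 % 2 = 0 ∧
    (binaryVal σ + 1) * m.unpair.2 ≤ m.unpair.1 / 2 * 2 ^ σ.length
  have primrec_below : PrimrecRel below := by
    have num : Primrec fun q : List Bool × ℕ => q.2.unpair.1 := primrec_unpair_fst Primrec.snd
    have den : Primrec fun q : List Bool × ℕ => q.2.unpair.2 := primrec_unpair_snd Primrec.snd
    exact (Primrec.eq.comp (Primrec.nat_mod.comp num (Primrec.const 2)) (Primrec.const 0)).and <|
      Primrec.nat_le.comp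
        (Primrec.nat_mul.comp (Primrec.succ.comp (primrec_binaryVal.comp Primrec.fst)) den)
        (Primrec.nat_mul.comp (Primrec.nat_div.comp num (Primrec.const 2))
          (primrec_two_pow.comp (Primrec.list_length.comp Primrec.fst)))
  refine (IsSigmaThree.exists_and primrec_below hα.isSigmaThree).of_iff fun σ => ?_
  rw [mem_stringsBelow_iff_exists_rat]
  simp only [natCast_div_le_rat_iff (Nat.two_pow_pos σ.length)]
  exact ⟨fun ⟨_, hm, q, hq, hqα⟩ => ⟨q, hq ▸ hm, hqα⟩, fun ⟨q, hm, hq⟩ => ⟨_, hm, q, rfl, hq⟩⟩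

section Measure

theorem measurable_digits : Measurable digits :=
  measurable_pi_lambda _ fun _ =>
    (measurable_from_top (f := fun z : ℤ => decide (z % 2 = 1))).comp
      (Int.measurable_floor.comp (measurable_id.mul_const _))

theorem measurableSet_setOf_initSeg_mem (S : Set (List Bool)) (n : ℕ) :
    MeasurableSet {X | initSeg X n ∈ S} := by
  have restrict : Measurable fun (X : Cantor) (i : Fin n) => X i :=
    measurable_pi_lambda _ fun i => measurable_pi_apply _
  have preimage : {X | initSeg X n ∈ S} =
      (fun (X : Cantor) (i : Fin n) => X i) ⁻¹' {f | List.ofFn f ∈ S} := by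
    ext X
    simp only [initSeg, Set.mem_ofPred_eq, Set.mem_preimage, List.ofFn_eq_map,
      ← List.map_coe_finRange_eq_range, List.map_map, Function.comp_def]
  rw [preimage]
  exact restrict .of_discrete

theorem measurableSet_cyl (W : Set (List Bool)) : MeasurableSet (cyl W) := by
  rw [cyl, Set.ofPred_exists]
  exact .iUnion fun n => measurableSet_setOf_initSeg_mem W n

theorem measurableSet_setOf_extends (ρ : List Bool) : MeasurableSet {X | Extends X ρ} :=
  measurableSet_setOf_initSeg_mem {ρ} ρ.length

variable {α : ℝ} {S : Set Cantor} {ρ : List Bool}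

theorem muR_eq_of_digits_mem_iff (hα : α ∈ Set.Icc (0 : ℝ) 1) (hS : MeasurableSet S)
    (h : ∀ x ∈ Set.Ico (0 : ℝ) 1, digits x ∈ S ↔ x < α) : muR S = α := by
  have preimage : digits ⁻¹' S ∩ Set.Ico 0 1 = Set.Ico 0 α := by
    ext x
    exact ⟨fun ⟨hxS, hx⟩ => ⟨hx.1, (h x hx).1 hxS⟩, fun hx =>
      have hx1 : x ∈ Set.Ico (0 : ℝ) 1 := ⟨hx.1, hx.2.trans_le hα.2⟩
      ⟨(h x hx1).2 hx.2, hx1⟩⟩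
  rw [muR, mu, Measure.map_apply measurable_digits hS,
    Measure.restrict_apply (measurable_digits hS), preimage, Real.volume_Ico, sub_zero,
    ENNReal.toReal_ofReal hα.1]

theorem muR_cyl_stringsBelow_diff (hα : α ∈ Set.Icc (0 : ℝ) 1)
    (hρ : α ≤ binaryVal ρ / 2 ^ ρ.length) :
    muR (cyl (stringsBelow α) \ {X | Extends X ρ}) = α := by
  refine muR_eq_of_digits_mem_iff hα
    ((measurableSet_cyl _).diff (measurableSet_setOf_extends ρ)) fun x hx => ?_
  refine (and_iff_left_of_imp fun hmem hext => ?_).trans (digits_mem_cyl_stringsBelow_iff hx)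
  exact ((digits_mem_cyl_stringsBelow_iff hx).1 hmem).not_ge
    (hρ.trans (mem_Ico_of_extends_digits hx hext).1)

theorem muR_cyl_stringsBelow_union (hα : α ∈ Set.Icc (0 : ℝ) 1)
    (hρ : (binaryVal ρ + 1) / 2 ^ ρ.length ≤ α) :
    muR (cyl (stringsBelow α) ∪ {X | Extends X ρ}) = α := by
  refine muR_eq_of_digits_mem_iff hα
    ((measurableSet_cyl _).union (measurableSet_setOf_extends ρ)) fun x hx => ?_
  refine (or_iff_left_of_imp fun hext => ?_).trans (digits_mem_cyl_stringsBelow_iff hx)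
  exact (digits_mem_cyl_stringsBelow_iff hx).2
    ((mem_Ico_of_extends_digits hx hext).2.trans_le hρ)

end Measure

/-- **Oracle machines with prescribed cofiniteness and computability probability.**
If `α ∈ (0,1)` is a `∅''`-left-c.e. real and `α + 2^{-c} < 1`, then there are an oracle
machine `M` and a string `ρ` of length `c` such that `M` diverges everywhere on every
oracle compatible with `ρ` (equivalently, on every oracle extending `ρ`) and
`μ(COF(M)) = α`; similarly, if `2^{-c} < α` there are such `M'` and `ρ'` with
`μ(COM(M')) = α`. -/
theorem prescribed_cof_com_probability (α : ℝ) (h0 : 0 < α) (h1 : α < 1)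
    (hα : LeftCeIn (iterJump 2) α) :
    (∀ c : ℕ, α + (2 : ℝ)⁻¹ ^ c < 1 →
      ∃ (M : CodeO) (ρ : List Bool), ρ.length = c ∧
        (∀ X : Cantor, Extends X ρ → ∀ n, ¬ (evalO X M n).Dom) ∧
        muR (COF M) = α) ∧
    (∀ c : ℕ, (2 : ℝ)⁻¹ ^ c < α →
      ∃ (M' : CodeO) (ρ' : List Bool), ρ'.length = c ∧
        (∀ X : Cantor, Extends X ρ' → ∀ n, ¬ (evalO X M' n).Dom) ∧
        muR (COM M') = α) := by
  have hα01 : α ∈ Set.Icc (0 : ℝ) 1 := ⟨h0.le, h1.le⟩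
  have hmachine := exists_machine_cof_com_eq (isSigmaThree_stringsBelow hα)
  refine ⟨fun c hc => ?_, fun c hc => ?_⟩
  · obtain ⟨M, diverges, hcof, -⟩ := hmachine (List.replicate c true)
    refine ⟨M, _, List.length_replicate, diverges, hcof ▸ muR_cyl_stringsBelow_diff hα01 ?_⟩
    have hval : (binaryVal (List.replicate c true) : ℝ) + 1 = 2 ^ c :=
      mod_cast binaryVal_replicate_true_add_one c
    rw [List.length_replicate, eq_sub_of_add_eq hval, sub_div, div_self (by positivity), one_div,
      ← inv_pow]
    linarith
  · obtain ⟨M, diverges, -, hcom⟩ := hmachine (List.replicate c false)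
    refine ⟨M, _, List.length_replicate, diverges, hcom ▸ muR_cyl_stringsBelow_union hα01 ?_⟩
    rw [List.length_replicate, binaryVal_replicate_false, Nat.cast_zero, zero_add, one_div,
      ← inv_pow]
    exact hc.le

end RandProb
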